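/- Let f : S → ℂ be a non-zero solution of the integral Van Vleck equation, and define g : S → ℂ by g(x) := (Σ_{i∈I} c_i f(x z_i)) / (Σ_{i∈I} c_i f(z_i)) (the denominator being non-zero). Then g is a non-zero solution of d'Alembert's functional equation g(xy) + g(xτ(y)) = 2 g(x) g(y) for all x, y ∈ S. -/

import Mathlib

/-!
Let `T h x = ∫ h(xt) dμ(t)` and `T⋆ h x = ∫ h(xτ(t)) dμ(t)`, so that the Van Vleck equation reads
`T f (xτ(y)) - T f (xy) = 2 f(x) f(y)`. It forces `f ∘ τ = -f`. Since `T` and `T⋆` commute and are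
exchanged by `τ`, the function `T⋆ (T f)` is odd as well, and integrating the equation over
`x = τ(t)` and over `y = t` then gives `T⋆ (T f) = D f` and `T (T f) = -D f` with `D = ∫ f dμ`.
Replacing `y` by `yt` in the equation and integrating over `t` now yields
`D (f(xτ(y)) + f(xy)) = 2 f(x) T f (y)`. This shows `D ≠ 0`, and applying `T` in the variable `x`
turns it into d'Alembert's equation for `T f / D`.
-/

section AtomicConvolution

variable {S ι R : Type*} [CommSemiring R]

/-- The integral `∫ h dμ` against the atomic measure `μ = ∑ i ∈ I, c i • δ_{z i}`, which is encoded
by the triple `I`, `c`, `z`. -/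
def atomicIntegral (I : Finset ι) (c : ι → R) (z : ι → S) (h : S → R) : R :=
  ∑ i ∈ I, c i * h (z i)

variable (R) in
/-- Right translation of functions on a semigroup, `(rightTranslate R s h) x = h (x * s)`, as an
operator on functions, so that commutation of translations is `Commute` in `Module.End`. -/
def rightTranslate [Mul S] (s : S) : Module.End R (S → R) :=
  LinearMap.funLeft R R (· * s)

/-- The convolution operator `h ↦ (x ↦ ∫ h(xt) dμ(t))` of the atomic measure
`μ = ∑ i ∈ I, c i • δ_{z i}`. -/
def atomicConvolution [Mul S] (I : Finset ι) (c : ι → R) (z : ι → S) : Module.End R (S → R) :=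
  ∑ i ∈ I, c i • rightTranslate R (z i)

theorem rightTranslate_apply [Mul S] (s : S) (h : S → R) (x : S) :
    rightTranslate R s h x = h (x * s) :=
  rfl

theorem atomicConvolution_apply [Mul S] (I : Finset ι) (c : ι → R) (z : ι → S) (h : S → R)
    (x : S) : atomicConvolution I c z h x = ∑ i ∈ I, c i * h (x * z i) := by
  simp only [atomicConvolution, LinearMap.sum_apply, LinearMap.smul_apply, Finset.sum_apply,
    Pi.smul_apply, rightTranslate_apply, smul_eq_mul]

variable [Semigroup S]

theorem rightTranslate_commute {s : S} (hs : s ∈ Set.center S) (t : S) :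
    Commute (rightTranslate R s) (rightTranslate R t) := by
  refine LinearMap.ext fun h => funext fun x => ?_
  simp only [Module.End.mul_apply, rightTranslate_apply, mul_assoc,
    Semigroup.mem_center_iff.mp hs t]

variable {I : Finset ι} {z : ι → S}

theorem atomicConvolution_commute_rightTranslate (c : ι → R) (hz : ∀ i ∈ I, z i ∈ Set.center S)
    (s : S) : Commute (atomicConvolution I c z) (rightTranslate R s) :=
  Commute.sum_left _ _ _ fun i hi => (rightTranslate_commute (hz i hi) s).smul_left (c i)

theorem atomicConvolution_commute {κ : Type*} (c : ι → R) (hz : ∀ i ∈ I, z i ∈ Set.center S)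
    (J : Finset κ) (d : κ → R) (w : κ → S) :
    Commute (atomicConvolution I c z) (atomicConvolution J d w) :=
  Commute.sum_right _ _ _ fun j _ =>
    (atomicConvolution_commute_rightTranslate c hz (w j)).smul_right (d j)

variable [StarMul S]

theorem atomicConvolution_comp_star (c : ι → R) (hz : ∀ i ∈ I, z i ∈ Set.center S) (h : S → R) :
    atomicConvolution I c z h ∘ star = atomicConvolution I c (star ∘ z) (h ∘ star) := by
  funext x
  simp only [Function.comp_apply, atomicConvolution_apply, star_mul, star_star]
  refine Finset.sum_congr rfl fun i hi => ?_
  rw [Semigroup.mem_center_iff.mp (hz i hi)]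

theorem atomicConvolution_star_atomicConvolution_comp_star (c : ι → R)
    (hz : ∀ i ∈ I, z i ∈ Set.center S) (h : S → R) :
    atomicConvolution I c (star ∘ z) (atomicConvolution I c z h) ∘ star =
      atomicConvolution I c (star ∘ z) (atomicConvolution I c z (h ∘ star)) := by
  have star_central : ∀ i ∈ I, (star ∘ z) i ∈ Set.center S := fun i hi =>
    Set.star_mem_center (hz i hi)
  have star_star_comp : star ∘ star ∘ z = z := funext fun i => star_star (z i)
  rw [atomicConvolution_comp_star c star_central, atomicConvolution_comp_star c hz, star_star_comp]
  exact LinearMap.congr_fun (atomicConvolution_commute c hz I c (star ∘ z)) (h ∘ star)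

end AtomicConvolution

section VanVleck

variable {S ι R : Type*} [Semigroup S] [StarMul S] [CommRing R]

/-- The integral Van Vleck equation for the atomic measure `μ = ∑ i ∈ I, c i • δ_{z i}`, on a
semigroup whose involution is written `star`. -/
def IsVanVleck (I : Finset ι) (c : ι → R) (z : ι → S) (f : S → R) : Prop :=
  ∀ x y, atomicConvolution I c z f (x * star y) - atomicConvolution I c z f (x * y) =
    2 * f x * f y

namespace IsVanVleck

variable {I : Finset ι} {c : ι → R} {z : ι → S} {f : S → R}

theorem atomicConvolution_apply_star_sub {κ : Type*} (hVV : IsVanVleck I c z f) {J : Finset κ}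
    (d : κ → R) {w : κ → S} (hw : ∀ j ∈ J, w j ∈ Set.center S) (y : S) :
    atomicConvolution J d w (atomicConvolution I c z f) (star y) -
        atomicConvolution J d w (atomicConvolution I c z f) y =
      2 * atomicIntegral J d w f * f y := by
  rw [atomicConvolution_apply J, atomicConvolution_apply J, atomicIntegral,
    ← Finset.sum_sub_distrib, Finset.mul_sum, Finset.sum_mul]
  refine Finset.sum_congr rfl fun j hj => ?_
  rw [Semigroup.mem_center_iff.mp (hw j hj), Semigroup.mem_center_iff.mp (hw j hj)]
  linear_combination d j * hVV (w j) y

theorem atomicConvolution_star_apply_sub {κ : Type*} (hVV : IsVanVleck I c z f) (J : Finset κ)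
    (d : κ → R) (w : κ → S) (x : S) :
    atomicConvolution J d (star ∘ w) (atomicConvolution I c z f) x -
        atomicConvolution J d w (atomicConvolution I c z f) x =
      2 * f x * atomicIntegral J d w f := by
  rw [atomicConvolution_apply J, atomicConvolution_apply J, atomicIntegral,
    ← Finset.sum_sub_distrib, Finset.mul_sum]
  refine Finset.sum_congr rfl fun j _ => ?_
  rw [Function.comp_apply]
  linear_combination d j * hVV x (w j)

theorem atomicConvolution_star_apply_mul_star_sub {κ : Type*} (hVV : IsVanVleck I c z f)
    {J : Finset κ} (d : κ → R) {w : κ → S} (hw : ∀ j ∈ J, w j ∈ Set.center S) (x y : S) :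
    atomicConvolution J d (star ∘ w) (atomicConvolution I c z f) (x * star y) -
        atomicConvolution J d w (atomicConvolution I c z f) (x * y) =
      2 * f x * atomicConvolution J d w f y := by
  rw [atomicConvolution_apply J, atomicConvolution_apply J, atomicConvolution_apply J,
    ← Finset.sum_sub_distrib, Finset.mul_sum]
  refine Finset.sum_congr rfl fun j hj => ?_
  have star_mul_comm : star (y * w j) = star y * star (w j) := by
    rw [Semigroup.mem_center_iff.mp (hw j hj), star_mul]
  have equation := hVV x (y * w j)
  rw [star_mul_comm, ← mul_assoc, ← mul_assoc] at equation
  rw [Function.comp_apply]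
  linear_combination d j * equation

variable [NoZeroDivisors R] [NeZero (2 : R)]

theorem comp_star (hVV : IsVanVleck I c z f) (hf : f ≠ 0) : f ∘ star = -f := by
  obtain ⟨x, hx⟩ := Function.ne_iff.mp hf
  funext y
  have equation_star := hVV x (star y)
  rw [star_star] at equation_star
  refine mul_left_cancel₀ (mul_ne_zero two_ne_zero hx) ?_
  simp only [Function.comp_apply, Pi.neg_apply]
  linear_combination -hVV x y - equation_star

theorem atomicConvolution_ne_zero (hVV : IsVanVleck I c z f) (hf : f ≠ 0) :
    atomicConvolution I c z f ≠ 0 := by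
  intro hT
  obtain ⟨x, hx⟩ := Function.ne_iff.mp hf
  have equation := hVV x x
  simp only [hT, Pi.zero_apply, sub_zero] at equation
  exact mul_ne_zero (mul_ne_zero two_ne_zero hx) hx equation.symm

theorem atomicConvolution_star_atomicConvolution (hVV : IsVanVleck I c z f)
    (hz : ∀ i ∈ I, z i ∈ Set.center S) (hf : f ≠ 0) :
    atomicConvolution I c (star ∘ z) (atomicConvolution I c z f) = atomicIntegral I c z f • f := by
  have star_central : ∀ i ∈ I, (star ∘ z) i ∈ Set.center S := fun i hi =>
    Set.star_mem_center (hz i hi)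
  have f_odd := hVV.comp_star hf
  have integral_odd : atomicIntegral I c (star ∘ z) f = -atomicIntegral I c z f := by
    simp only [atomicIntegral, ← Finset.sum_neg_distrib, ← mul_neg]
    exact Finset.sum_congr rfl fun i _ => congrArg (c i * ·) (congrFun f_odd (z i))
  have convolution_odd := atomicConvolution_star_atomicConvolution_comp_star c hz f
  rw [f_odd, map_neg, map_neg] at convolution_odd
  funext y
  have at_star := congrFun convolution_odd y
  have difference := hVV.atomicConvolution_apply_star_sub c star_central y
  simp only [Function.comp_apply, Pi.neg_apply] at at_star
  rw [at_star, integral_odd] at difference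
  refine mul_left_cancel₀ (two_ne_zero (α := R)) ?_
  rw [Pi.smul_apply, smul_eq_mul]
  linear_combination -difference

theorem atomicConvolution_atomicConvolution (hVV : IsVanVleck I c z f)
    (hz : ∀ i ∈ I, z i ∈ Set.center S) (hf : f ≠ 0) :
    atomicConvolution I c z (atomicConvolution I c z f) = -(atomicIntegral I c z f • f) := by
  funext x
  have difference := hVV.atomicConvolution_star_apply_sub I c z x
  rw [hVV.atomicConvolution_star_atomicConvolution hz hf] at difference
  simp only [Pi.smul_apply, smul_eq_mul, Pi.neg_apply] at difference ⊢
  linear_combination -difference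

theorem atomicIntegral_mul_add (hVV : IsVanVleck I c z f)
    (hz : ∀ i ∈ I, z i ∈ Set.center S) (hf : f ≠ 0) (x y : S) :
    atomicIntegral I c z f * (f (x * star y) + f (x * y)) =
      2 * f x * atomicConvolution I c z f y := by
  have difference := hVV.atomicConvolution_star_apply_mul_star_sub c hz x y
  rw [hVV.atomicConvolution_star_atomicConvolution hz hf,
    hVV.atomicConvolution_atomicConvolution hz hf] at difference
  simp only [Pi.smul_apply, smul_eq_mul, Pi.neg_apply] at difference
  linear_combination difference

theorem atomicIntegral_ne_zero (hVV : IsVanVleck I c z f)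
    (hz : ∀ i ∈ I, z i ∈ Set.center S) (hf : f ≠ 0) : atomicIntegral I c z f ≠ 0 := by
  intro hD
  obtain ⟨x, hx⟩ := Function.ne_iff.mp hf
  obtain ⟨y, hy⟩ := Function.ne_iff.mp (hVV.atomicConvolution_ne_zero hf)
  have equation := hVV.atomicIntegral_mul_add hz hf x y
  rw [hD, zero_mul] at equation
  exact mul_ne_zero (mul_ne_zero two_ne_zero hx) hy equation.symm

theorem atomicIntegral_mul_atomicConvolution_add (hVV : IsVanVleck I c z f)
    (hz : ∀ i ∈ I, z i ∈ Set.center S) (hf : f ≠ 0) (x y : S) :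
    atomicIntegral I c z f *
        (atomicConvolution I c z f (x * star y) + atomicConvolution I c z f (x * y)) =
      2 * atomicConvolution I c z f x * atomicConvolution I c z f y := by
  have translates : atomicIntegral I c z f • (rightTranslate R (star y) f + rightTranslate R y f) =
      (2 * atomicConvolution I c z f y) • f := by
    funext x'
    simp only [Pi.smul_apply, Pi.add_apply, rightTranslate_apply, smul_eq_mul]
    linear_combination hVV.atomicIntegral_mul_add hz hf x' y
  have convolution_translate (s : S) : atomicConvolution I c z (rightTranslate R s f) =
      rightTranslate R s (atomicConvolution I c z f) :=
    LinearMap.congr_fun (atomicConvolution_commute_rightTranslate c hz s) f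
  have convolved := congrFun (congrArg (atomicConvolution I c z) translates) x
  simp only [map_smul, map_add, convolution_translate, Pi.smul_apply, Pi.add_apply,
    rightTranslate_apply, smul_eq_mul] at convolved
  linear_combination convolved

end IsVanVleck

end VanVleck

theorem stmt_6_general {S ι K : Type*} [Semigroup S] [Field K] [NeZero (2 : K)] (τ : S → S)
    (hτmul : ∀ x y : S, τ (x * y) = τ y * τ x)
    (hτinv : ∀ x : S, τ (τ x) = x)
    (I : Finset ι) (c : ι → K) (z : ι → S)
    (hz : ∀ i ∈ I, ∀ s : S, z i * s = s * z i)
    (f : S → K) (hf : f ≠ 0)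
    (hVV : ∀ x y : S,
      (∑ i ∈ I, c i * f (x * τ y * z i)) - (∑ i ∈ I, c i * f (x * y * z i))
        = 2 * f x * f y)
    (g : S → K)
    (hg : ∀ x : S, g x = (∑ i ∈ I, c i * f (x * z i)) / (∑ i ∈ I, c i * f (z i))) :
    g ≠ 0 ∧ ∀ x y : S, g (x * y) + g (x * τ y) = 2 * g x * g y := by
  let _ : StarMul S := { star := τ, star_involutive := hτinv, star_mul := hτmul }
  have z_central : ∀ i ∈ I, z i ∈ Set.center S := fun i hi =>
    Semigroup.mem_center_iff.mpr fun s => (hz i hi s).symm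
  have f_vanVleck : IsVanVleck I c z f := fun x y => by
    simp only [atomicConvolution_apply]
    exact hVV x y
  have g_apply (x : S) : g x = atomicConvolution I c z f x / atomicIntegral I c z f := by
    rw [hg, atomicConvolution_apply, atomicIntegral]
  have integral_ne_zero := f_vanVleck.atomicIntegral_ne_zero z_central hf
  constructor
  · obtain ⟨x, hx⟩ := Function.ne_iff.mp (f_vanVleck.atomicConvolution_ne_zero hf)
    exact Function.ne_iff.mpr ⟨x, g_apply x ▸ div_ne_zero hx integral_ne_zero⟩
  · intro x y
    simp only [g_apply]
    field_simp
    linear_combination f_vanVleck.atomicIntegral_mul_atomicConvolution_add z_central hf x y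

theorem stmt_6 {S ι : Type*} [Semigroup S] (τ : S → S)
    (hτmul : ∀ x y : S, τ (x * y) = τ y * τ x)
    (hτinv : ∀ x : S, τ (τ x) = x)
    (I : Finset ι) (c : ι → ℂ) (z : ι → S)
    (hz : ∀ i ∈ I, ∀ s : S, z i * s = s * z i)
    (f : S → ℂ) (hf : f ≠ 0)
(hVV : ∀ x y : S,
      (∑ i ∈ I, c i * f (x * τ y * z i)) - (∑ i ∈ I, c i * f (x * y * z i))
        = 2 * f x * f y)
    (g : S → ℂ)
    (hg : ∀ x : S, g x = (∑ i ∈ I, c i * f (x * z i)) / (∑ i ∈ I, c i * f (z i))) :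
    g ≠ 0 ∧ ∀ x y : S, g (x * y) + g (x * τ y) = 2 * g x * g y :=
  stmt_6_general τ hτmul hτinv I c z hz f hf hVV g hg
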